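/- Let r, l be positive integers, ε_S ∈ (0,1) and ε_H > 0. Let λ₁ ≥ λ₂ ≥ … ≥ λ_r be real numbers with λ_r < −ε_H, and let w₁, …, w_r ∈ ℝ^l be vectors such that 1 − ε_S ≤ ‖w_r‖² ≤ 1 + ε_S and ⟨w_i, w_r⟩² ≤ 16·(1+ε_S)/l for all i ≠ r. Let κ_H = min{0, λ₁/λ_r} and m = 1 − ε_S + 16·((r−1)/l)·((1+ε_S)/(1−ε_S))·κ_H, and assume 1 − ε_S + 16·((r−1)/l)·((1+ε_S)/(1−ε_S))·(λ₁/λ_r) ≥ 0. Then the smallest eigenvalue of the symmetric l×l matrix Σ_{i=1}^r λ_i·w_i·w_iᵀ satisfies λ_min( Σ_{i=1}^r λ_i·w_i·w_iᵀ ) ≤ −ε_H·m. -/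

import Mathlib

open scoped BigOperators NNReal
open MeasureTheory ProbabilityTheory

namespace RARC

noncomputable def enorm {n : ℕ} (v : Fin n → ℝ) : ℝ := Real.sqrt (∑ i, v i ^ 2)

noncomputable def opNorm {m n : ℕ} (S : Matrix (Fin m) (Fin n) ℝ) : ℝ :=
  sSup {c : ℝ | ∃ v : Fin n → ℝ, enorm v = 1 ∧ c = enorm (S.mulVec v)}

noncomputable def grad {n : ℕ} (f : (Fin n → ℝ) → ℝ) (x : Fin n → ℝ) : Fin n → ℝ :=
  fun i => fderiv ℝ f x (Pi.single i 1)

noncomputable def hess {n : ℕ} (f : (Fin n → ℝ) → ℝ) (x : Fin n → ℝ) :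
    Matrix (Fin n) (Fin n) ℝ :=
  Matrix.of fun i j =>
    fderiv ℝ (fun y => fderiv ℝ f y (Pi.single j 1)) x (Pi.single i 1)

noncomputable def qhat {d l : ℕ} (f : (Fin d → ℝ) → ℝ) (x : Fin d → ℝ)
    (S : Matrix (Fin l) (Fin d) ℝ) (s : Fin l → ℝ) : ℝ :=
  f x + (∑ i, S.mulVec (grad f x) i * s i)
    + (1/2) * (∑ i, s i * (S * hess f x * S.transpose).mulVec s i)

noncomputable def mhat {d l : ℕ} (f : (Fin d → ℝ) → ℝ) (x : Fin d → ℝ)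
    (S : Matrix (Fin l) (Fin d) ℝ) (α : ℝ) (s : Fin l → ℝ) : ℝ :=
  qhat f x S s + (1/(3*α)) * enorm (S.transpose.mulVec s) ^ 3

noncomputable def lambdaMin {n : ℕ} (A : Matrix (Fin n) (Fin n) ℝ) : ℝ :=
  sInf {t : ℝ | ∃ v : Fin n → ℝ, enorm v = 1 ∧ t = ∑ i, v i * A.mulVec v i}

def LipschitzHessian {n : ℕ} (f : (Fin n → ℝ) → ℝ) (L : ℝ) : Prop :=
  ∀ x y : Fin n → ℝ, opNorm (hess f y - hess f x) ≤ L * enorm (y - x)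

noncomputable def augM {d : ℕ} (f : (Fin d → ℝ) → ℝ) (x : Fin d → ℝ) :
    Matrix (Fin d) (Fin (d+1)) ℝ :=
  Matrix.of fun i j => Fin.cases (grad f x i) (fun j' => hess f x i j') j

noncomputable def gaussVec (l : ℕ) : Measure (Fin l → ℝ) :=
  Measure.pi fun _ => gaussianReal 0 (l : ℝ≥0)⁻¹

noncomputable def scaledGaussian (l d : ℕ) : Measure (Fin l → Fin d → ℝ) :=
  Measure.pi fun _ : Fin l => Measure.pi fun _ : Fin d => gaussianReal 0 (l : ℝ≥0)⁻¹


theorem quad_eq {n l : ℕ} (lam : Fin n → ℝ) (w : Fin n → (Fin l → ℝ)) (v : Fin l → ℝ) :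
    ∑ i, v i * (∑ k, lam k • Matrix.vecMulVec (w k) (w k)).mulVec v i
      = ∑ k, lam k * (∑ j, w k j * v j) ^ 2 := by
  have h : ∀ i, (∑ k, lam k • Matrix.vecMulVec (w k) (w k)).mulVec v i
      = ∑ k, lam k * (w k i * ∑ j, w k j * v j) := by
    intro i
    simp only [Matrix.mulVec, dotProduct, Matrix.sum_apply, Matrix.smul_apply,
      Matrix.vecMulVec_apply, smul_eq_mul, Finset.sum_mul, Finset.mul_sum]
    rw [Finset.sum_comm]
    refine Finset.sum_congr rfl fun k _ => Finset.sum_congr rfl fun j _ => by ring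
  simp only [h, Finset.mul_sum]
  rw [Finset.sum_comm]
  refine Finset.sum_congr rfl fun k _ => ?_
  rw [sq, Finset.sum_mul, Finset.mul_sum]
  refine Finset.sum_congr rfl fun i _ => ?_
  rw [Finset.mul_sum, Finset.mul_sum]
  refine Finset.sum_congr rfl fun j _ => by ring

theorem enorm_sq {n : ℕ} (v : Fin n → ℝ) : enorm v ^ 2 = ∑ i, v i ^ 2 :=
  Real.sq_sqrt (Finset.sum_nonneg fun _ _ => sq_nonneg _)

theorem stmt14 (n l : ℕ) (hl : 0 < l) (ε_S ε_H : ℝ)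
    (hεS : ε_S ∈ Set.Ioo (0:ℝ) 1) (hεH : 0 < ε_H)
    (lam : Fin (n+1) → ℝ) (hlam : Antitone lam) (hlast : lam (Fin.last n) < -ε_H)
    (w : Fin (n+1) → (Fin l → ℝ))
    (hw1 : 1 - ε_S ≤ enorm (w (Fin.last n)) ^ 2)
    (hw2 : enorm (w (Fin.last n)) ^ 2 ≤ 1 + ε_S)
    (hw3 : ∀ i, i ≠ Fin.last n →
      (∑ j, w i j * w (Fin.last n) j) ^ 2 ≤ 16 * (1 + ε_S) / l)
    (hb : 1 - ε_S + 16 * ((n:ℝ)/l) * ((1 + ε_S)/(1 - ε_S))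
            * (lam 0 / lam (Fin.last n)) ≥ 0) :
    lambdaMin (∑ i, lam i • Matrix.vecMulVec (w i) (w i))
      ≤ -ε_H * (1 - ε_S + 16 * ((n:ℝ)/l) * ((1 + ε_S)/(1 - ε_S))
            * min 0 (lam 0 / lam (Fin.last n))) := by
  obtain ⟨h0, h1⟩ := hεS
  have hL : lam (Fin.last n) < 0 := by linarith
  have hlR : (0:ℝ) < l := by exact_mod_cast hl
  set W := w (Fin.last n) with hW
  set N := enorm W with hN
  have hNn : 0 ≤ N := Real.sqrt_nonneg _
  have hN2 : 0 < N ^ 2 := by linarith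
  have hNpos : 0 < N := by
    rcases hNn.lt_or_eq with h | h
    · exact h
    · rw [← h] at hN2; simp at hN2
  have hNs : N ^ 2 = ∑ j, W j ^ 2 := enorm_sq W
  have hbdd : BddBelow {t : ℝ | ∃ v : Fin l → ℝ, enorm v = 1 ∧
      t = ∑ i, v i * (∑ k, lam k • Matrix.vecMulVec (w k) (w k)).mulVec v i} := by
    refine ⟨∑ k, lam (Fin.last n) * ∑ j, w k j ^ 2, ?_⟩
    rintro t ⟨v, hv, rfl⟩
    rw [quad_eq]
    refine Finset.sum_le_sum fun k _ => ?_
    have hv2 : ∑ j, v j ^ 2 = 1 := by rw [← enorm_sq, hv]; norm_num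
    have hc := Finset.sum_mul_sq_le_sq_mul_sq Finset.univ (w k) v
    rw [hv2, mul_one] at hc
    have hk : lam (Fin.last n) ≤ lam k := hlam (Fin.le_last k)
    nlinarith [mul_nonneg (sub_nonneg.2 hk) (sq_nonneg (∑ j, w k j * v j)),
      mul_nonneg (neg_nonneg.2 hL.le) (sub_nonneg.2 hc)]
  set L := lam (Fin.last n) with hLd
  set P := max 0 (lam 0) with hP
  have hP0 : 0 ≤ P := le_max_left _ _
  have hmin : L * min 0 (lam 0 / L) = P := by
    rcases le_total 0 (lam 0) with h | h
    · rw [min_eq_right (div_nonpos_of_nonneg_of_nonpos h hL.le), hP, max_eq_right h]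
      exact mul_div_cancel₀ _ hL.ne
    · rw [min_eq_left (div_nonneg_of_nonpos h hL.le), hP, max_eq_left h, mul_zero]
  have hm0 : 0 ≤ 1 - ε_S + 16 * ((n:ℝ)/l) * ((1 + ε_S)/(1 - ε_S)) * min 0 (lam 0 / L) := by
    rcases min_choice 0 (lam 0 / L) with h | h
    · rw [h]; linarith
    · rw [h]; exact hb
  set m := 1 - ε_S + 16 * ((n:ℝ)/l) * ((1 + ε_S)/(1 - ε_S)) * min 0 (lam 0 / L) with hm
  have hLm : L * m = L * (1 - ε_S) + n * (P * (16 * (1 + ε_S) / l / (1 - ε_S))) := by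
    rw [hm, ← hmin]; ring
  have hfin : L * m ≤ -ε_H * m := mul_le_mul_of_nonneg_right hlast.le hm0
  refine le_trans (csInf_le hbdd ⟨fun j => W j / N, ?_, rfl⟩) (le_trans ?_ hfin)
  · unfold enorm
    simp only [div_pow]
    rw [← Finset.sum_div, ← hNs, div_self hN2.ne', Real.sqrt_one]
  rw [quad_eq, hLm, Fin.sum_univ_castSucc, add_comm]
  have hin : ∀ k, (∑ j, w k j * (W j / N)) ^ 2 = (∑ j, w k j * W j) ^ 2 / N ^ 2 := by
    intro k
    simp only [← mul_div_assoc]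
    rw [← Finset.sum_div, div_pow]
  refine add_le_add ?_ ?_
  · rw [hin]
    have : ∑ j, w (Fin.last n) j * W j = N ^ 2 := by
      rw [hNs]; exact Finset.sum_congr rfl fun j _ => by rw [← hW]; ring
    rw [this, sq (N ^ 2), mul_div_assoc, div_self hN2.ne', mul_one]
    exact mul_le_mul_of_nonpos_left hw1 hL.le
  · have : ∀ k : Fin n, lam k.castSucc * (∑ j, w k.castSucc j * (W j / N)) ^ 2
        ≤ P * (16 * (1 + ε_S) / l / (1 - ε_S)) := by
      intro k
      have hk : lam k.castSucc ≤ P := le_trans (hlam (Fin.zero_le _)) (le_max_right _ _)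
      refine mul_le_mul hk ?_ (sq_nonneg _) hP0
      rw [hin]
      exact div_le_div₀ (by positivity) (hw3 _ (Fin.castSucc_lt_last k).ne) (by linarith) hw1
    refine (Finset.sum_le_sum fun k _ => this k).trans ?_
    simp

end RARC
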